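/- Let Σ_A(ℕ) be a topologically mixing, finitely primitive (BIP) countable Markov shift, f : Σ_A(ℕ) → ℝ satisfying the Walters condition with Var_1 f < ∞ and P(f) < ∞, and for β > 1 let μ_β be the Gibbs measure of βf. Then lim_{β→∞} P(βf)/β = m(f) and lim_{β→∞} ∫ f dμ_β = m(f). -/

import Mathlib

open Filter Topology MeasureTheory
open scoped ENNReal

/-- The countable Markov shift over alphabet ℕ determined by the 0-1 matrix `A`. -/
def MarkovShift (A : ℕ → ℕ → Bool) : Type :=
  {x : ℕ → ℕ // ∀ i, A (x i) (x (i + 1)) = true}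

namespace MarkovShift

variable {A : ℕ → ℕ → Bool}

instance : TopologicalSpace (MarkovShift A) :=
  instTopologicalSpaceSubtype

instance : MeasurableSpace (MarkovShift A) := borel _

instance : BorelSpace (MarkovShift A) := ⟨rfl⟩

/-- The shift map. -/
def shift (x : MarkovShift A) : MarkovShift A :=
  ⟨fun n => x.1 (n + 1), fun i => x.2 (i + 1)⟩

/-- The cylinder set determined by a finite word. -/
def cylinder (w : List ℕ) : Set (MarkovShift A) :=
  {x | ∀ i : Fin w.length, x.1 i = w.get i}

/-- The cylinder set determined by the first `m` coordinates of `x`. -/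
def cylOf (x : MarkovShift A) (m : ℕ) : Set (MarkovShift A) :=
  {y | ∀ i < m, y.1 i = x.1 i}

/-- A symbol is admissible when its cylinder is nonempty. -/
def Admissible (A : ℕ → ℕ → Bool) (a : ℕ) : Prop :=
  ∃ x : MarkovShift A, x.1 0 = a

/-- Topologically mixing. -/
def TopologicallyMixing (A : ℕ → ℕ → Bool) : Prop :=
  ∀ a b : ℕ, Admissible A a → Admissible A b →
    ∃ N : ℕ, ∀ n ≥ N, ∃ x : MarkovShift A, x.1 0 = a ∧ (shift^[n] x).1 0 = b

/-- Finitely primitive (BIP). -/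
def FinitelyPrimitive (A : ℕ → ℕ → Bool) : Prop :=
  ∃ (K₀ : ℕ) (F : Finset ℕ), ∀ a b : ℕ, Admissible A a → Admissible A b →
    ∃ w : List ℕ, w.length = K₀ ∧ (∀ c ∈ w, c ∈ F) ∧
      List.Chain' (fun u v => A u v = true) (a :: (w ++ [b]))

/-- First coordinate where two distinct points disagree. -/
noncomputable def firstDiff (x y : MarkovShift A) (h : x ≠ y) : ℕ :=
  Nat.find (Function.ne_iff.mp (fun hxy : x.1 = y.1 => h (Subtype.ext hxy)))

open Classical in
/-- The metric `d(x,y) = r^{t(x,y)}`. -/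
noncomputable def dist' (r : ℝ) (x y : MarkovShift A) : ℝ :=
  if h : x = y then 0 else r ^ firstDiff x y h

/-- Birkhoff sum `S_n f`. -/
def birkhoff (f : MarkovShift A → ℝ) (n : ℕ) (x : MarkovShift A) : ℝ :=
  ∑ j ∈ Finset.range n, f (shift^[j] x)

/-- The set of values `|S_n f x - S_n f y|` over pairs agreeing on the first `m` coordinates. -/
def varSet (f : MarkovShift A → ℝ) (n m : ℕ) : Set ℝ :=
  {c | ∃ x y : MarkovShift A, (∀ i < m, x.1 i = y.1 i) ∧ c = |birkhoff f n x - birkhoff f n y|}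

/-- `Var_m (S_n f)`. -/
noncomputable def varBirk (f : MarkovShift A → ℝ) (n m : ℕ) : ℝ := sSup (varSet f n m)

/-- `Var_1 f < ∞`. -/
def Var1Finite (f : MarkovShift A → ℝ) : Prop := BddAbove (varSet f 1 1)

/-- The set whose supremum is `sup_{n ≥ 1} Var_{n+k}(S_n f)`. -/
def waltersSet (f : MarkovShift A → ℝ) (k : ℕ) : Set ℝ :=
  {c | ∃ n, 1 ≤ n ∧ c ∈ varSet f n (n + k)}

/-- `M_k = sup_{n ≥ 1} Var_{n+k}(S_n f)`. -/
noncomputable def waltersSup (f : MarkovShift A → ℝ) (k : ℕ) : ℝ := sSup (waltersSet f k)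

/-- The Walters condition. -/
def SatisfiesWalters (f : MarkovShift A → ℝ) : Prop :=
  (∀ k, 1 ≤ k → BddAbove (waltersSet f k)) ∧
    Tendsto (fun k => waltersSup f k) atTop (𝓝 0)

/-- The partition function `Z_n(f,a) = Σ_{σ^n x = x, x₀ = a} e^{S_n f (x)}`. -/
noncomputable def partitionSum (f : MarkovShift A → ℝ) (n : ℕ) (a : ℕ) : ℝ :=
  ∑' x : {x : MarkovShift A // shift^[n] x = x ∧ x.1 0 = a}, Real.exp (birkhoff f n x.1)

/-- `f` has (finite) Gurevich pressure `p`. -/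
def HasGurevichPressure (f : MarkovShift A → ℝ) (p : ℝ) : Prop :=
  ∀ a : ℕ, Admissible A a →
    (∀ n, 1 ≤ n → Summable fun x : {x : MarkovShift A // shift^[n] x = x ∧ x.1 0 = a} =>
        Real.exp (birkhoff f n x.1)) ∧
    Tendsto (fun n : ℕ => (1 / (n : ℝ)) * Real.log (partitionSum f n a)) atTop (𝓝 p)

/-- σ-invariant Borel probability measure. -/
def IsInvariantProb (μ : Measure (MarkovShift A)) : Prop :=
  IsProbabilityMeasure μ ∧ μ.map shift = μ

/-- `m(f)`, the maximal ergodic average. -/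
noncomputable def mf (f : MarkovShift A → ℝ) : ℝ :=
  sSup {c | ∃ μ : Measure (MarkovShift A),
    IsInvariantProb μ ∧ Integrable f μ ∧ ∫ x, f x ∂μ = c}

/-- A maximizing measure for `f`. -/
def IsMaximizing (f : MarkovShift A → ℝ) (μ : Measure (MarkovShift A)) : Prop :=
  IsInvariantProb μ ∧ Integrable f μ ∧ ∫ x, f x ∂μ = mf f

/-- Bounded real valued function. -/
def BoundedFun (g : MarkovShift A → ℝ) : Prop := ∃ C, ∀ x, |g x| ≤ C

/-- A bounded calibrated sub-action for `f`. -/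
def IsCalibratedSubaction (f V : MarkovShift A → ℝ) : Prop :=
  Continuous V ∧ BoundedFun V ∧
    (∀ x, f x + V x - V (shift x) - mf f ≤ 0) ∧
    (∀ y, ∃ x, shift x = y ∧ f x + V x - V (shift x) - mf f = 0)

/-- The Ruelle transfer operator `(L_g u)(x) = Σ_{σ y = x} e^{g(y)} u(y)`. -/
noncomputable def ruelle (g u : MarkovShift A → ℝ) (x : MarkovShift A) : ℝ :=
  ∑' y : {y : MarkovShift A // shift y = x}, Real.exp (g y.1) * u y.1

/-- Ruelle-Perron-Frobenius data for the potential `f` with pressure `p`: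
eigenfunction `h`, eigenmeasure `ν`. -/
def IsRPF (f : MarkovShift A → ℝ) (p : ℝ) (h : MarkovShift A → ℝ)
    (ν : Measure (MarkovShift A)) : Prop :=
  Continuous h ∧ (∀ x, 0 < h x) ∧
    (∀ x, ruelle f h x = Real.exp p * h x) ∧
    IsProbabilityMeasure ν ∧
    (∀ g : MarkovShift A → ℝ, Continuous g → BoundedFun g →
      ∫ x, ruelle f g x ∂ν = Real.exp p * ∫ x, g x ∂ν) ∧
    ∫ x, h x ∂ν = 1

/-- The Gibbs measure `dμ = h dν`. -/
noncomputable def gibbs (h : MarkovShift A → ℝ) (ν : Measure (MarkovShift A)) :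
    Measure (MarkovShift A) :=
  ν.withDensity fun x => ENNReal.ofReal (h x)

/-- The Mañé potential `S_f(x,y)` (with respect to the metric of parameter `r`). -/
noncomputable def manePot (r : ℝ) (f : MarkovShift A → ℝ) (x y : MarkovShift A) : EReal :=
  ⨅ ε : {ε : ℝ // 0 < ε}, ⨆ n : {n : ℕ // 1 ≤ n},
    ⨆ _z : {z : MarkovShift A // dist' r x z < ε.1 ∧ shift^[n.1] z = y},
      ((birkhoff (fun w => f w - mf f) n.1 _z.1 : ℝ) : EReal)

/-- The (topological) support of a measure. -/
def msupport (μ : Measure (MarkovShift A)) : Set (MarkovShift A) :=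
  {x | ∀ U : Set (MarkovShift A), IsOpen U → x ∈ U → 0 < μ U}

end MarkovShift

namespace MarkovShift

section helpers

variable {A : ℕ → ℕ → Bool}

instance instMetrizableMarkov : TopologicalSpace.MetrizableSpace (MarkovShift A) :=
  haveI : TopologicalSpace.MetrizableSpace (ℕ → ℕ) :=
    TopologicalSpace.metrizableSpace_of_t3_secondCountable _
  Topology.IsEmbedding.metrizableSpace (f := fun x : MarkovShift A => x.1)
    Topology.IsEmbedding.subtypeVal

lemma continuous_coord (n : ℕ) : Continuous (fun x : MarkovShift A => x.1 n) :=
  (continuous_apply n).comp continuous_subtype_val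

lemma continuous_shift : Continuous (shift : MarkovShift A → MarkovShift A) := by
  refine Continuous.subtype_mk (f := fun (x : MarkovShift A) n => x.1 (n + 1)) ?_ _
  exact continuous_pi fun n => continuous_coord (n + 1)

lemma shift_iterate_coord (n : ℕ) : ∀ (x : MarkovShift A) (i : ℕ),
    (shift^[n] x).1 i = x.1 (i + n) := by
  induction n with
  | zero => intro x i; rfl
  | succ n ih =>
    intro x i
    rw [Function.iterate_succ_apply, ih]
    show x.1 (i + n + 1) = _
    rfl

/-- Prepend the symbol `b` if this is possible (and do nothing otherwise). -/
def consMap (b : ℕ) (x : MarkovShift A) : MarkovShift A :=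
  ⟨fun n => if A b (x.1 0) = true then (if n = 0 then b else x.1 (n - 1)) else x.1 n, by
    intro i
    by_cases hb : A b (x.1 0) = true
    · rcases i with _ | i
      · simp [hb]
      · simpa [hb] using x.2 i
    · simpa [hb] using x.2 i⟩

lemma continuous_consMap (b : ℕ) : Continuous (consMap b : MarkovShift A → MarkovShift A) := by
  refine Continuous.subtype_mk (f := fun (x : MarkovShift A) n =>
    if A b (x.1 0) = true then (if n = 0 then b else x.1 (n - 1)) else x.1 n) ?_ _
  refine continuous_pi fun n => ?_
  have h1 : Continuous (fun x : MarkovShift A => (x.1 0, x.1 (n - 1), x.1 n)) :=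
    (continuous_coord 0).prodMk ((continuous_coord (n - 1)).prodMk (continuous_coord n))
  have h2 : Continuous (fun p : ℕ × ℕ × ℕ =>
      if A b p.1 = true then (if n = 0 then b else p.2.1) else p.2.2) :=
    continuous_of_discreteTopology
  exact h2.comp h1

lemma shift_consMap {b : ℕ} {x : MarkovShift A} (hb : A b (x.1 0) = true) :
    shift (consMap b x) = x := by
  apply Subtype.ext
  funext n
  simp [shift, consMap, hb]

lemma consMap_zero {b : ℕ} {x : MarkovShift A} (hb : A b (x.1 0) = true) :
    (consMap b x).1 0 = b := by
  simp [consMap, hb]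

lemma consMap_shift (y : MarkovShift A) : consMap (y.1 0) (shift y) = y := by
  apply Subtype.ext
  funext n
  have : A (y.1 0) ((shift y).1 0) = true := y.2 0
  rcases n with _ | n
  · simp [consMap, this]
  · simp only [consMap, this, if_true]
    simp [shift]

/-- The fibre of the shift over `x` is indexed by the admissible preceding symbols. -/
def fibreEquiv (x : MarkovShift A) :
    {b : ℕ | A b (x.1 0) = true} ≃ {y : MarkovShift A // shift y = x} where
  toFun b := ⟨consMap b.1 x, shift_consMap b.2⟩
  invFun y := ⟨y.1.1 0, by
    obtain ⟨y, rfl⟩ := y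
    exact y.2 0⟩
  left_inv b := by
    apply Subtype.ext
    exact consMap_zero b.2
  right_inv y := by
    apply Subtype.ext
    obtain ⟨y, rfl⟩ := y
    exact consMap_shift y

/-- The weight of the branch `b`. -/
noncomputable def wt (g : MarkovShift A → ℝ) (b : ℕ) (x : MarkovShift A) : ℝ≥0∞ :=
  if A b (x.1 0) = true then ENNReal.ofReal (Real.exp (g (consMap b x))) else 0

lemma measurable_wt {g : MarkovShift A → ℝ} (hg : Continuous g) (b : ℕ) : Measurable (wt g b) := by
  refine Measurable.ite ?_ ?_ measurable_const
  · have : Continuous (fun x : MarkovShift A => A b (x.1 0)) :=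
      (continuous_of_discreteTopology (f := fun n => A b n)).comp (continuous_coord 0)
    exact this.measurable (MeasurableSet.singleton true)
  · exact ENNReal.measurable_ofReal.comp
      (Real.continuous_exp.comp (hg.comp (continuous_consMap b))).measurable

/-- The transfer operator with values in `[0,∞]`. -/
noncomputable def eL (g : MarkovShift A → ℝ) (G : MarkovShift A → ℝ≥0∞) (x : MarkovShift A) :
    ℝ≥0∞ := ∑' b, wt g b x * G (consMap b x)

lemma measurable_eL {g : MarkovShift A → ℝ} (hg : Continuous g) {G : MarkovShift A → ℝ≥0∞}
    (hG : Measurable G) : Measurable (eL g G) :=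
  Measurable.tsum fun b =>
    (measurable_wt hg b).mul (hG.comp (continuous_consMap b).measurable)

lemma eL_eq_fibre (g : MarkovShift A → ℝ) (G : MarkovShift A → ℝ≥0∞) (x : MarkovShift A) :
    eL g G x = ∑' y : {y : MarkovShift A // shift y = x},
      ENNReal.ofReal (Real.exp (g y.1)) * G y.1 := by
  rw [← (fibreEquiv x).tsum_eq]
  have := tsum_subtype {b : ℕ | A b (x.1 0) = true}
    (fun b => ENNReal.ofReal (Real.exp (g (consMap b x))) * G (consMap b x))
  refine Eq.trans ?_ this.symm
  unfold eL wt
  refine tsum_congr fun b => ?_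
  by_cases hb : A b (x.1 0) = true <;> simp [hb]

lemma eL_ofReal {g u : MarkovShift A → ℝ} (hu : ∀ x, 0 ≤ u x) {x : MarkovShift A}
    (hs : Summable fun y : {y : MarkovShift A // shift y = x} => Real.exp (g y.1) * u y.1) :
    eL g (fun y => ENNReal.ofReal (u y)) x = ENNReal.ofReal (ruelle g u x) := by
  rw [eL_eq_fibre, ruelle, ENNReal.ofReal_tsum_of_nonneg _ hs]
  · refine tsum_congr fun y => ?_
    rw [ENNReal.ofReal_mul (Real.exp_pos _).le]
  · intro y
    exact mul_nonneg (Real.exp_pos _).le (hu _)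

/-- A coboundary bounded below by an integrable function is integrable with zero integral. -/
lemma coboundary_integral {μ : Measure (MarkovShift A)} (hμ : IsInvariantProb μ)
    {u E : MarkovShift A → ℝ} (hu : Measurable u) (hE : Integrable E μ)
    (hle : ∀ x, E x ≤ u (shift x) - u x) :
    Integrable (fun x => u (shift x) - u x) μ ∧ ∫ x, (u (shift x) - u x) ∂μ = 0 := by
  have := hμ.1
  have hσ : MeasurePreserving (shift : MarkovShift A → MarkovShift A) μ μ :=
    ⟨continuous_shift.measurable, hμ.2⟩
  have hus : Measurable (fun x => u (shift x)) := hu.comp hσ.measurable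
  let c : ℕ → ℝ → ℝ := fun k t => max (-(k : ℝ)) (min t k)
  have hcm : ∀ k, Measurable (c k) := fun k => by fun_prop
  have hcb : ∀ k t, |c k t| ≤ k := by
    intro k t
    have hk : (0 : ℝ) ≤ k := Nat.cast_nonneg k
    rw [abs_le]
    exact ⟨le_max_left _ _, max_le (by linarith) (min_le_right _ _)⟩
  have hcint : ∀ k, Integrable (fun x => c k (u x)) μ := fun k =>
    Integrable.of_bound ((hcm k).comp hu).aestronglyMeasurable k
      (Eventually.of_forall fun x => hcb k _)
  have hcint' : ∀ k, Integrable (fun x => c k (u (shift x))) μ := fun k =>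
    Integrable.of_bound ((hcm k).comp hus).aestronglyMeasurable k
      (Eventually.of_forall fun x => hcb k _)
  have hzero : ∀ k, ∫ x, (c k (u (shift x)) - c k (u x)) ∂μ = 0 := by
    intro k
    rw [integral_sub (hcint' k) (hcint k)]
    have h1 : ∫ x, c k (u x) ∂(μ.map shift) = ∫ x, c k (u (shift x)) ∂μ :=
      integral_map hσ.measurable.aemeasurable
        ((hcm k).comp hu).aestronglyMeasurable
    rw [hμ.2] at h1
    rw [h1, sub_self]
  have hclim : ∀ t, Tendsto (fun k => c k t) atTop (𝓝 t) := by
    intro t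
    apply tendsto_const_nhds.congr'
    obtain ⟨N, hN⟩ := exists_nat_ge |t|
    filter_upwards [eventually_ge_atTop N] with k hk
    have hk' : |t| ≤ k := hN.trans (by exact_mod_cast hk)
    rw [abs_le] at hk'
    simp only [c]
    rw [min_eq_left hk'.2, max_eq_right hk'.1]
  have hclow : ∀ k s t, -|t - s| ≤ c k t - c k s ∧ c k t - c k s ≤ |t - s| := by
    intro k s t
    rw [← abs_le]
    simp only [c]
    refine (abs_max_sub_max_le_max _ _ _ _).trans ?_
    refine max_le (by simp) ?_
    refine (abs_min_sub_min_le_max _ _ _ _).trans ?_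
    simp
  have hcmono : ∀ k, Monotone (c k) := by
    intro k s t hst
    exact max_le_max le_rfl (min_le_min hst le_rfl)
  have hneg : ∀ k x, 0 ≤ c k (u (shift x)) - c k (u x) + |E x| := by
    intro k x
    rcases le_total (u x) (u (shift x)) with h | h
    · have := hcmono k h
      have := abs_nonneg (E x)
      linarith
    · have h1 := (hclow k (u x) (u (shift x))).1
      rw [abs_of_nonpos (by linarith)] at h1
      have h2 := hle x
      have h3 := neg_abs_le (E x)
      linarith
  have hwm : Measurable (fun x => u (shift x) - u x) := hus.sub hu
  have hfatou : ∫⁻ x, ENNReal.ofReal (u (shift x) - u x + |E x|) ∂μ ≤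
      ENNReal.ofReal (∫ x, |E x| ∂μ) := by
    have h1 : ∀ k, ∫⁻ x, ENNReal.ofReal (c k (u (shift x)) - c k (u x) + |E x|) ∂μ =
        ENNReal.ofReal (∫ x, |E x| ∂μ) := by
      intro k
      have h0 := ofReal_integral_eq_lintegral_ofReal (((hcint' k).sub (hcint k)).add hE.abs)
        (Eventually.of_forall fun x => hneg k x)
      refine h0.symm.trans ?_
      congr 1
      have := integral_add ((hcint' k).sub (hcint k)) hE.abs
      refine this.trans ?_
      simp only [Pi.sub_apply]
      rw [hzero k, zero_add]
    have h2 := lintegral_liminf_le' (μ := μ) (u := atTop)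
      (f := fun k x => ENNReal.ofReal (c k (u (shift x)) - c k (u x) + |E x|))
      (fun k => ((((hcint' k).sub (hcint k)).add hE.abs).aemeasurable).ennreal_ofReal)
    simp only [h1] at h2
    rw [liminf_const] at h2
    refine le_trans (le_of_eq ?_) h2
    refine lintegral_congr fun x => ?_
    refine (Tendsto.liminf_eq ?_).symm
    refine (ENNReal.continuous_ofReal.tendsto _).comp ?_
    exact ((hclim _).sub (hclim _)).add tendsto_const_nhds
  have hint1 : Integrable (fun x => u (shift x) - u x + |E x|) μ := by
    refine ⟨hwm.aestronglyMeasurable.add hE.abs.aestronglyMeasurable, ?_⟩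
    rw [hasFiniteIntegral_iff_ofReal]
    · exact hfatou.trans_lt ENNReal.ofReal_lt_top
    · refine Eventually.of_forall fun x => ?_
      have h2 := hle x
      have h3 := neg_abs_le (E x)
      show 0 ≤ u (shift x) - u x + |E x|
      linarith
  have hint : Integrable (fun x => u (shift x) - u x) μ := by
    refine (hint1.sub hE.abs).congr (Eventually.of_forall fun x => ?_)
    simp
  refine ⟨hint, ?_⟩
  have hdct := tendsto_integral_of_dominated_convergence (μ := μ)
    (F := fun k x => c k (u (shift x)) - c k (u x)) (f := fun x => u (shift x) - u x)
    (fun x => |u (shift x) - u x|)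
    (fun k => ((hcint' k).sub (hcint k)).aestronglyMeasurable) hint.abs
    (fun k => Eventually.of_forall fun x => by
      rw [Real.norm_eq_abs]; exact abs_le.2 (hclow k _ _))
    (Eventually.of_forall fun x => (hclim _).sub (hclim _))
  simp only [hzero] at hdct
  exact tendsto_nhds_unique hdct tendsto_const_nhds |>.symm ▸ rfl

lemma var1_bound {f : MarkovShift A → ℝ} (hVar1 : Var1Finite f) :
    ∃ V : ℝ, ∀ x y : MarkovShift A, x.1 0 = y.1 0 → |f x - f y| ≤ V := by
  obtain ⟨V, hV⟩ := hVar1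
  refine ⟨V, fun x y hxy => hV ⟨x, y, ?_, ?_⟩⟩
  · intro i hi
    obtain rfl : i = 0 := by omega
    exact hxy
  · simp [birkhoff]

lemma continuous_of_walters {f : MarkovShift A → ℝ} (hW : SatisfiesWalters f) : Continuous f := by
  rw [continuous_iff_continuousAt]
  intro x
  rw [ContinuousAt, Metric.tendsto_nhds]
  intro ε hε
  obtain ⟨k, hk1, hk⟩ := ((eventually_ge_atTop 1).and
    (hW.2.eventually (gt_mem_nhds hε))).exists
  have hopen : ∀ᶠ y in 𝓝 x, ∀ i ∈ Finset.range (1 + k), y.1 i = x.1 i := by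
    rw [Filter.eventually_all_finset]
    intro i _
    exact (continuous_coord i).continuousAt.eventually
      ((isOpen_discrete {x.1 i}).mem_nhds rfl)
  filter_upwards [hopen] with y hy
  refine lt_of_le_of_lt ?_ hk
  refine le_csSup (hW.1 k hk1) ⟨1, le_rfl, y, x, fun i hi => hy i (Finset.mem_range.2 hi), ?_⟩
  simp [birkhoff, Real.dist_eq]

/-- A periodic point through `a` and `b`, all other symbols lying in `F`. -/
lemma exists_periodic {K : ℕ} {F : Finset ℕ}
    (hF : ∀ a b : ℕ, Admissible A a → Admissible A b →
      ∃ w : List ℕ, w.length = K ∧ (∀ c ∈ w, c ∈ F) ∧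
        List.IsChain (fun u v => A u v = true) (a :: (w ++ [b])))
    {a b : ℕ} (ha : Admissible A a) (hb : Admissible A b) :
    ∃ z : MarkovShift A, shift^[2 * K + 2] z = z ∧ z.1 0 = a ∧ z.1 (K + 1) = b ∧
      ∀ j < 2 * K + 2, j ≠ K + 1 → z.1 j ∈ insert a F := by
  obtain ⟨w, hw, hwF, hwc⟩ := hF a b ha hb
  obtain ⟨v, hv, hvF, hvc⟩ := hF b a hb ha
  rw [List.isChain_iff_getElem] at hwc hvc
  set n := 2 * K + 2 with hn
  let s : ℕ → ℕ := fun j => if j = 0 then a else if j ≤ K then w.getD (j - 1) 0 else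
    if j = K + 1 then b else v.getD (j - K - 2) 0
  have hs : ∀ j < n, A (s j) (s ((j + 1) % n)) = true := by
    intro j hj
    by_cases h1 : j ≤ K
    · have h := hwc j (by simp; omega)
      have e1 : s j = (a :: (w ++ [b]))[j]'(by simp; omega) := by
        simp only [s]
        grind
      have e2 : s ((j + 1) % n) = (a :: (w ++ [b]))[j + 1]'(by simp; omega) := by
        rw [Nat.mod_eq_of_lt (by omega)]
        simp only [s]
        grind
      rw [e1, e2]; exact h
    · have h := hvc (j - K - 1) (by simp; omega)
      have e1 : s j = (b :: (v ++ [a]))[j - K - 1]'(by simp; omega) := by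
        simp only [s]
        grind
      have e2 : s ((j + 1) % n) = (b :: (v ++ [a]))[j - K - 1 + 1]'(by simp; omega) := by
        by_cases h2 : j + 1 = n
        · rw [h2, Nat.mod_self]
          simp only [s]
          grind
        · rw [Nat.mod_eq_of_lt (by omega)]
          simp only [s]
          grind
      rw [e1, e2]; exact h
  have hnpos : 0 < n := by omega
  refine ⟨⟨fun i => s (i % n), ?_⟩, ?_, ?_, ?_, ?_⟩
  · intro i
    have := hs (i % n) (Nat.mod_lt _ hnpos)
    simpa using this
  · apply Subtype.ext
    funext i
    refine (shift_iterate_coord n _ i).trans ?_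
    show s ((i + n) % n) = s (i % n)
    simp
  · simp [s]
  · show s ((K + 1) % n) = b
    rw [Nat.mod_eq_of_lt (by omega)]
    simp [s]
  · intro j hj hjK
    show s (j % n) ∈ _
    rw [Nat.mod_eq_of_lt hj, Finset.mem_insert]
    simp only [s]
    by_cases h0 : j = 0
    · simp [h0]
    · right
      by_cases h1 : j ≤ K
      · rw [if_neg h0, if_pos h1, List.getD_eq_getElem _ _ (by omega)]
        exact hwF _ (List.getElem_mem _)
      · rw [if_neg h0, if_neg h1, if_neg hjK, List.getD_eq_getElem _ _ (by omega)]
        exact hvF _ (List.getElem_mem _)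

/-- Finite pressure and BIP imply summability of `exp (sup f|[b])`. -/
lemma exists_summable (hbip : FinitelyPrimitive A) {f : MarkovShift A → ℝ}
    (hVar1 : Var1Finite f) {p : ℝ} (hP : HasGurevichPressure f p) [Nonempty (MarkovShift A)] :
    ∃ s : ℕ → ℝ, Summable s ∧ ∀ y : MarkovShift A, Real.exp (f y) ≤ s (y.1 0) := by
  classical
  obtain ⟨K, F, hF⟩ := hbip
  obtain ⟨V, hV⟩ := var1_bound hVar1
  obtain ⟨x₀⟩ := ‹Nonempty (MarkovShift A)›
  set a := x₀.1 0 with ha_def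
  have ha : Admissible A a := ⟨x₀, rfl⟩
  have hsum := (hP a ha).1 (2 * K + 2) (by omega)
  have hlow : ∀ c : ℕ, ∃ B : ℝ, 0 ≤ B ∧ ∀ x : MarkovShift A, x.1 0 = c → -B ≤ f x := by
    intro c
    by_cases hc : Admissible A c
    · obtain ⟨y, hy⟩ := hc
      refine ⟨|f y| + |V|, by positivity, fun x hx => ?_⟩
      have h1 := abs_le.1 (hV x y (hx.trans hy.symm))
      have h2 := neg_abs_le (f y)
      have h3 := le_abs_self V
      linarith [h1.1]
    · exact ⟨0, le_rfl, fun x hx => absurd ⟨x, hx⟩ hc⟩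
  choose B hB0 hB using hlow
  set C : ℝ := ∑ c ∈ insert a F, B c with hC
  have hC0 : 0 ≤ C := Finset.sum_nonneg fun c _ => hB0 c
  have hBC : ∀ c ∈ insert a F, B c ≤ C := fun c hc =>
    Finset.single_le_sum (f := B) (fun c _ => hB0 c) hc
  have hz : ∀ b : {b : ℕ // Admissible A b}, ∃ z : MarkovShift A, shift^[2 * K + 2] z = z ∧
      z.1 0 = a ∧ z.1 (K + 1) = b.1 ∧ ∀ j < 2 * K + 2, j ≠ K + 1 → z.1 j ∈ insert a F :=
    fun b => exists_periodic hF ha b.2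
  choose z hz1 hz2 hz3 hz4 using hz
  let ζ : {b : ℕ // Admissible A b} →
      {x : MarkovShift A // shift^[2 * K + 2] x = x ∧ x.1 0 = a} :=
    fun b => ⟨z b, hz1 b, hz2 b⟩
  have hζ : Function.Injective ζ := by
    intro b b' hbb
    apply Subtype.ext
    rw [← hz3 b, ← hz3 b']
    have : z b = z b' := congrArg Subtype.val hbb
    rw [this]
  have hsum2 := hsum.comp_injective hζ
  set n := 2 * K + 2 with hn
  let T : ℝ := Real.exp (V + n * C)
  let s0 : {b : ℕ // Admissible A b} → ℝ := fun b => T * Real.exp (birkhoff f n (z b))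
  have hs0 : Summable s0 := hsum2.mul_left T
  refine ⟨fun b => if hb : Admissible A b then s0 ⟨b, hb⟩ else 0, ?_, ?_⟩
  · have h1 : Summable (Set.indicator {b | Admissible A b}
        (fun b => if hb : Admissible A b then s0 ⟨b, hb⟩ else 0)) := by
      rw [← summable_subtype_iff_indicator]
      refine hs0.congr fun b => ?_
      have := b.2
      simp [this]
    refine h1.congr fun b => ?_
    by_cases hb : Admissible A b <;> simp [hb]
  · intro y
    have hy : Admissible A (y.1 0) := ⟨y, rfl⟩
    simp only [hy, dif_pos, s0, T]
    rw [← Real.exp_add]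
    apply Real.exp_le_exp.2
    have hmem : K + 1 ∈ Finset.range n := Finset.mem_range.2 (by omega)
    set Z := z ⟨y.1 0, hy⟩ with hZ
    have hbk : birkhoff f n Z = f (shift^[K + 1] Z) +
        ∑ j ∈ (Finset.range n).erase (K + 1), f (shift^[j] Z) :=
      (Finset.add_sum_erase _ _ hmem).symm
    have hlow2 : -(n * C) ≤ ∑ j ∈ (Finset.range n).erase (K + 1), f (shift^[j] Z) := by
      have h1 : ∑ j ∈ (Finset.range n).erase (K + 1), (-C) ≤
          ∑ j ∈ (Finset.range n).erase (K + 1), f (shift^[j] Z) := by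
        apply Finset.sum_le_sum
        intro j hj
        rw [Finset.mem_erase, Finset.mem_range] at hj
        have h2 := hz4 ⟨y.1 0, hy⟩ j hj.2 hj.1
        have h3 := hB (Z.1 j) (shift^[j] Z) (by rw [shift_iterate_coord, zero_add])
        have h4 := hBC _ h2
        linarith
      rw [Finset.sum_const, Finset.card_erase_of_mem hmem, Finset.card_range, nsmul_eq_mul] at h1
      have h5 : ((n - 1 : ℕ) : ℝ) ≤ n := by exact_mod_cast Nat.sub_le n 1
      nlinarith
    have hV' := abs_le.1 (hV y (shift^[K + 1] Z) (by
      rw [shift_iterate_coord, zero_add]; exact (hz3 ⟨y.1 0, hy⟩).symm))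
    rw [hbk]
    linarith [hV'.2]

lemma rpf_summable {g : MarkovShift A → ℝ} {p : ℝ} {h : MarkovShift A → ℝ}
    {ν : Measure (MarkovShift A)} (hR : IsRPF g p h ν) (x : MarkovShift A) :
    Summable fun y : {y : MarkovShift A // shift y = x} => Real.exp (g y.1) * h y.1 := by
  by_contra hs
  have h1 := hR.2.2.1 x
  rw [ruelle, tsum_eq_zero_of_not_summable hs] at h1
  have := mul_pos (Real.exp_pos p) (hR.2.1 x)
  linarith

lemma rpf_eL {g : MarkovShift A → ℝ} {p : ℝ} {h : MarkovShift A → ℝ}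
    {ν : Measure (MarkovShift A)} (hR : IsRPF g p h ν) (x : MarkovShift A) :
    eL g (fun y => ENNReal.ofReal (h y)) x =
      ENNReal.ofReal (Real.exp p) * ENNReal.ofReal (h x) := by
  rw [eL_ofReal (fun x => (hR.2.1 x).le) (rpf_summable hR x), hR.2.2.1 x,
    ENNReal.ofReal_mul (Real.exp_pos p).le]

lemma rpf_le {g : MarkovShift A → ℝ} {p : ℝ} {h : MarkovShift A → ℝ}
    {ν : Measure (MarkovShift A)} (hR : IsRPF g p h ν) (y : MarkovShift A) :
    g y - p ≤ Real.log (h (shift y)) - Real.log (h y) := by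
  have h1 := (rpf_summable hR (shift y)).le_tsum ⟨y, rfl⟩ (fun z _ =>
    mul_nonneg (Real.exp_pos _).le (hR.2.1 _).le)
  have h2 := hR.2.2.1 (shift y)
  rw [ruelle] at h2
  rw [h2] at h1
  have h3 := Real.log_le_log (mul_pos (Real.exp_pos _) (hR.2.1 y)) h1
  rw [Real.log_mul (Real.exp_pos _).ne' (hR.2.1 _).ne',
    Real.log_mul (Real.exp_pos _).ne' (hR.2.1 _).ne', Real.log_exp, Real.log_exp] at h3
  linarith

/-- The dual identity for all nonnegative measurable functions. -/
lemma rpf_dual {g : MarkovShift A → ℝ} {p : ℝ} {h : MarkovShift A → ℝ}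
    {ν : Measure (MarkovShift A)} (hR : IsRPF g p h ν) (hg : Continuous g)
    {s : ℕ → ℝ} (hs : Summable s) (hsg : ∀ y : MarkovShift A, Real.exp (g y) ≤ s (y.1 0))
    {G : MarkovShift A → ℝ≥0∞} (hG : Measurable G) :
    ∫⁻ x, eL g G x ∂ν = ENNReal.ofReal (Real.exp p) * ∫⁻ x, G x ∂ν := by
  have hprob := hR.2.2.2.1
  let ν' : Measure (MarkovShift A) :=
    Measure.sum fun b => (ν.withDensity (wt g b)).map (consMap b)
  have hν' : ∀ G : MarkovShift A → ℝ≥0∞, Measurable G → ∫⁻ x, G x ∂ν' = ∫⁻ x, eL g G x ∂ν := by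
    intro G hG
    simp only [ν']
    rw [lintegral_sum_measure]
    unfold eL
    rw [lintegral_tsum]
    · refine tsum_congr fun b => ?_
      rw [lintegral_map hG (continuous_consMap b).measurable,
        lintegral_withDensity_eq_lintegral_mul _ (measurable_wt hg b)
          (g := fun x => G (consMap b x)) (hG.comp (continuous_consMap b).measurable)]
      rfl
    · intro b
      exact ((measurable_wt hg b).mul (hG.comp (continuous_consMap b).measurable)).aemeasurable
  have hsumm : ∀ x : MarkovShift A, Summable fun y : {y : MarkovShift A // shift y = x} =>
      Real.exp (g y.1) := by
    intro x
    rw [← (fibreEquiv x).summable_iff]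
    refine Summable.of_nonneg_of_le (fun b => (Real.exp_pos _).le) (fun b => ?_)
      (hs.comp_injective (Subtype.val_injective (p := fun b : ℕ => A b (x.1 0) = true)))
    have := hsg (consMap b.1 x)
    rw [consMap_zero b.2] at this
    exact this
  have hbdd : ∀ g' : BoundedContinuousFunction (MarkovShift A) NNReal,
      ∫⁻ x, eL g (fun y => (g' y : ℝ≥0∞)) x ∂ν =
        ENNReal.ofReal (Real.exp p) * ∫⁻ x, (g' x : ℝ≥0∞) ∂ν := by
    intro g'
    have hgc : Continuous (fun x => (g' x : ℝ)) := NNReal.continuous_coe.comp g'.continuous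
    obtain ⟨M, hM⟩ : ∃ M : ℝ, ∀ x, (g' x : ℝ) ≤ M := by
      refine ⟨nndist g' 0, fun x => ?_⟩
      have := BoundedContinuousFunction.NNReal.upper_bound g' x
      exact_mod_cast this
    have hgb : BoundedFun (fun x => (g' x : ℝ)) :=
      ⟨M, fun x => (abs_of_nonneg (NNReal.coe_nonneg (g' x))).le.trans (hM x)⟩
    have hdual := hR.2.2.2.2.1 _ hgc hgb
    have hsx : ∀ x : MarkovShift A, Summable fun y : {y : MarkovShift A // shift y = x} =>
        Real.exp (g y.1) * (g' y.1 : ℝ) := by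
      intro x
      refine Summable.of_nonneg_of_le (fun y => mul_nonneg (Real.exp_pos _).le (NNReal.coe_nonneg (g' _)))
        (fun y => ?_) ((hsumm x).mul_right M)
      exact mul_le_mul_of_nonneg_left (hM _) (Real.exp_pos _).le
    have heq : ∀ x, eL g (fun y => (g' y : ℝ≥0∞)) x =
        ENNReal.ofReal (ruelle g (fun y => (g' y : ℝ)) x) := by
      intro x
      rw [← eL_ofReal (u := fun y => (g' y : ℝ)) (fun x => NNReal.coe_nonneg (g' x)) (hsx x)]
      simp only [ENNReal.ofReal_coe_nnreal]
    have hnn : ∀ x, 0 ≤ ruelle g (fun y => (g' y : ℝ)) x := fun x =>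
      tsum_nonneg fun y => mul_nonneg (Real.exp_pos _).le (NNReal.coe_nonneg (g' _))
    have hmeas : Measurable (ruelle g (fun y => (g' y : ℝ))) := by
      have h1 : Measurable (eL g (fun y => (g' y : ℝ≥0∞))) :=
        measurable_eL hg (ENNReal.continuous_coe.comp g'.continuous).measurable
      have h2 : ruelle g (fun y => (g' y : ℝ)) =
          fun x => (eL g (fun y => (g' y : ℝ≥0∞)) x).toReal := by
        funext x
        rw [heq, ENNReal.toReal_ofReal (hnn x)]
      rw [h2]
      exact h1.ennreal_toReal
    have hubd : ∃ R : ℝ, ∀ x, ruelle g (fun y => (g' y : ℝ)) x ≤ R := by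
      have hs0 : ∀ b, 0 ≤ |s b| := fun b => abs_nonneg _
      refine ⟨(∑' b, |s b|) * |M|, fun x => ?_⟩
      rw [ruelle, ← (fibreEquiv x).tsum_eq, ← tsum_mul_right]
      have hs' : Summable fun b => |s b| * |M| := hs.abs.mul_right _
      refine le_trans ?_ (hs'.tsum_subtype_le _ {b : ℕ | A b (x.1 0) = true}
        (fun b => mul_nonneg (hs0 b) (abs_nonneg M)))
      refine Summable.tsum_le_tsum (fun b => ?_)
        ((fibreEquiv x).summable_iff.2 (hsx x)) (hs'.subtype _)
      have h1 := hsg (consMap b.1 x)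
      rw [consMap_zero b.2] at h1
      exact mul_le_mul (h1.trans (le_abs_self _)) ((hM _).trans (le_abs_self _)) (NNReal.coe_nonneg (g' _)) (hs0 _)
    obtain ⟨R, hRb⟩ := hubd
    have hint : Integrable (ruelle g (fun y => (g' y : ℝ))) ν :=
      Integrable.of_bound hmeas.aestronglyMeasurable R
        (Eventually.of_forall fun x => by
          rw [Real.norm_eq_abs, abs_of_nonneg (hnn x)]; exact hRb x)
    simp only [heq]
    rw [← ofReal_integral_eq_lintegral_ofReal hint (Eventually.of_forall hnn), hdual,
      ENNReal.ofReal_mul (Real.exp_pos p).le,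
      ofReal_integral_eq_lintegral_ofReal (f := fun x => (g' x : ℝ)) _ (Eventually.of_forall fun x => (NNReal.coe_nonneg (g' x)))]
    · simp only [ENNReal.ofReal_coe_nnreal]
    · exact Integrable.of_bound hgc.measurable.aestronglyMeasurable M
        (Eventually.of_forall fun x => by
          rw [Real.norm_eq_abs, abs_of_nonneg (NNReal.coe_nonneg (g' x))]; exact hM x)
  have key : ENNReal.ofReal (Real.exp p) • ν = ν' := by
    have : IsFiniteMeasure (ENNReal.ofReal (Real.exp p) • ν) :=
      ⟨by
        rw [Measure.smul_apply, smul_eq_mul]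
        exact ENNReal.mul_lt_top ENNReal.ofReal_lt_top (measure_lt_top _ _)⟩
    refine ext_of_forall_lintegral_eq_of_IsFiniteMeasure fun g' => ?_
    rw [hν' (fun x => (g' x : ℝ≥0∞)) (ENNReal.continuous_coe.comp g'.continuous).measurable, hbdd g',
      lintegral_smul_measure, smul_eq_mul]
  rw [← hν' G hG, ← key, lintegral_smul_measure, smul_eq_mul]

lemma lintegral_gibbs {g : MarkovShift A → ℝ} {p : ℝ} {h : MarkovShift A → ℝ}
    {ν : Measure (MarkovShift A)} (hR : IsRPF g p h ν)
    {G : MarkovShift A → ℝ≥0∞} (hG : Measurable G) :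
    ∫⁻ x, G x ∂(gibbs h ν) = ∫⁻ x, ENNReal.ofReal (h x) * G x ∂ν := by
  unfold gibbs
  rw [lintegral_withDensity_eq_lintegral_mul _ hR.1.measurable.ennreal_ofReal hG]
  rfl

lemma lintegral_h {g : MarkovShift A → ℝ} {p : ℝ} {h : MarkovShift A → ℝ}
    {ν : Measure (MarkovShift A)} (hR : IsRPF g p h ν) :
    ∫⁻ x, ENNReal.ofReal (h x) ∂ν = 1 := by
  have h1 : ∫ x, h x ∂ν = 1 := hR.2.2.2.2.2
  have hint : Integrable h ν := by
    by_contra hc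
    rw [integral_undef hc] at h1
    exact zero_ne_one h1
  rw [← ofReal_integral_eq_lintegral_ofReal hint (Eventually.of_forall fun x => (hR.2.1 x).le),
    h1, ENNReal.ofReal_one]

lemma ofReal_exp_ne_zero (p : ℝ) : ENNReal.ofReal (Real.exp p) ≠ 0 := by
  simpa using Real.exp_pos p

lemma gibbs_invariant {g : MarkovShift A → ℝ} {p : ℝ} {h : MarkovShift A → ℝ}
    {ν : Measure (MarkovShift A)} (hR : IsRPF g p h ν) (hg : Continuous g)
    {s : ℕ → ℝ} (hs : Summable s) (hsg : ∀ y : MarkovShift A, Real.exp (g y) ≤ s (y.1 0)) :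
    IsInvariantProb (gibbs h ν) := by
  have hh : Measurable (fun x => ENNReal.ofReal (h x)) := hR.1.measurable.ennreal_ofReal
  refine ⟨⟨?_⟩, ?_⟩
  · rw [← lintegral_one, lintegral_gibbs hR measurable_const]
    simpa using lintegral_h hR
  · refine Measure.ext_of_lintegral _ fun G hG => ?_
    have hGs : Measurable (fun x : MarkovShift A => G (shift x)) :=
      hG.comp continuous_shift.measurable
    rw [lintegral_map hG continuous_shift.measurable, lintegral_gibbs hR hGs,
      lintegral_gibbs hR hG]
    rw [← ENNReal.mul_right_inj (ofReal_exp_ne_zero p) ENNReal.ofReal_ne_top,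
      ← rpf_dual hR hg hs hsg (G := fun x => ENNReal.ofReal (h x) * G (shift x)) (hh.mul hGs),
      ← lintegral_const_mul (f := fun x => ENNReal.ofReal (h x) * G x) _ (hh.mul hG)]
    refine lintegral_congr fun x => ?_
    rw [← mul_assoc, ← rpf_eL hR x, eL, eL, ← ENNReal.tsum_mul_right]
    refine tsum_congr fun b => ?_
    by_cases hb : A b (x.1 0) = true
    · rw [shift_consMap hb, mul_assoc]
    · simp [wt, hb]

/-- The change of measure identity between two RPF data. -/
lemma gibbs_change {g g' : MarkovShift A → ℝ} {p p' : ℝ} {h h' : MarkovShift A → ℝ}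
    {ν ν' : Measure (MarkovShift A)} (hR : IsRPF g p h ν) (hR' : IsRPF g' p' h' ν')
    (hg : Continuous g) (hg' : Continuous g')
    {s : ℕ → ℝ} (hs : Summable s) (hsg : ∀ y : MarkovShift A, Real.exp (g y) ≤ s (y.1 0)) :
    ∫⁻ x, ENNReal.ofReal (Real.exp (g' x - g x
      - ((Real.log (h' (shift x)) - Real.log (h (shift x))) - (Real.log (h' x) - Real.log (h x)))
      - (p' - p))) ∂(gibbs h ν) = 1 := by
  have hlog : Measurable (fun x => Real.log (h x)) := hR.1.measurable.log
  have hlog' : Measurable (fun x => Real.log (h' x)) := hR'.1.measurable.log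
  have hsm : Measurable (shift : MarkovShift A → MarkovShift A) := continuous_shift.measurable
  have hh : Measurable (fun x => ENNReal.ofReal (h x)) := hR.1.measurable.ennreal_ofReal
  have hD : Measurable (fun x => ENNReal.ofReal (Real.exp (g' x - g x
      - ((Real.log (h' (shift x)) - Real.log (h (shift x))) - (Real.log (h' x) - Real.log (h x)))
      - (p' - p)))) := by
    refine (Real.measurable_exp.comp ?_).ennreal_ofReal
    exact ((hg'.measurable.sub hg.measurable).sub
      (((hlog'.comp hsm).sub (hlog.comp hsm)).sub (hlog'.sub hlog))).sub measurable_const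
  rw [lintegral_gibbs hR hD]
  rw [← ENNReal.mul_right_inj (ofReal_exp_ne_zero p) ENNReal.ofReal_ne_top,
    ← rpf_dual hR hg hs hsg (G := fun x => ENNReal.ofReal (h x) * _) (hh.mul hD), ← lintegral_h hR, ← lintegral_const_mul _ hh]
  refine lintegral_congr fun x => ?_
  have e1 : ENNReal.ofReal (Real.exp p) * ENNReal.ofReal (h x) =
      (ENNReal.ofReal (Real.exp p') * ENNReal.ofReal (h' x)) *
        ENNReal.ofReal (Real.exp (p - p' + Real.log (h x) - Real.log (h' x))) := by
    rw [← ENNReal.ofReal_mul (Real.exp_pos _).le, ← ENNReal.ofReal_mul (Real.exp_pos _).le,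
      ← ENNReal.ofReal_mul (mul_pos (Real.exp_pos _) (hR'.2.1 x)).le]
    congr 1
    conv_lhs => rw [← Real.exp_log (hR.2.1 x)]
    conv_rhs => rw [← Real.exp_log (hR'.2.1 x)]
    rw [Real.log_exp, ← Real.exp_add, ← Real.exp_add, ← Real.exp_add]
    congr 1
    ring
  rw [e1, ← rpf_eL hR' x, eL, eL, ← ENNReal.tsum_mul_right]
  refine tsum_congr fun b => ?_
  by_cases hb : A b (x.1 0) = true
  · rw [shift_consMap hb]
    simp only [wt, hb, if_true]
    set y := consMap b x
    have hy := hR.2.1 y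
    have hy' := hR'.2.1 y
    rw [← ENNReal.ofReal_mul hy.le, ← ENNReal.ofReal_mul (Real.exp_pos _).le,
      ← ENNReal.ofReal_mul (Real.exp_pos _).le,
      ← ENNReal.ofReal_mul (mul_pos (Real.exp_pos _) hy').le]
    congr 1
    have e2 : h y = Real.exp (Real.log (h y)) := (Real.exp_log hy).symm
    have e3 : h' y = Real.exp (Real.log (h' y)) := (Real.exp_log hy').symm
    generalize Real.log (h y) = l at e2 ⊢
    generalize Real.log (h' y) = l' at e3 ⊢
    rw [e2, e3, ← Real.exp_add, ← Real.exp_add, ← Real.exp_add, ← Real.exp_add]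
    congr 1
    ring
  · simp [wt, hb]

lemma rpf_upper {f h : MarkovShift A → ℝ} {β p : ℝ} {ν μ : Measure (MarkovShift A)}
    (hR : IsRPF (fun x => β * f x) p h ν) (hμ : IsInvariantProb μ) (hf : Integrable f μ) :
    β * ∫ x, f x ∂μ ≤ p := by
  have := hμ.1
  have hE : Integrable (fun x => β * f x - p) μ := (hf.const_mul β).sub (integrable_const p)
  obtain ⟨h1, h2⟩ := coboundary_integral hμ (u := fun x => Real.log (h x))
    hR.1.measurable.log hE (rpf_le hR)
  have h3 := integral_mono hE h1 (rpf_le hR)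
  rw [h2, integral_sub (hf.const_mul β) (integrable_const p), integral_const_mul] at h3
  simp at h3
  linarith

lemma rpf_lower {f h h' : MarkovShift A → ℝ} {β β' p p' C : ℝ} {ν ν' : Measure (MarkovShift A)}
    (hR : IsRPF (fun x => β * f x) p h ν) (hR' : IsRPF (fun x => β' * f x) p' h' ν')
    (hβ : β' < β) (hf : Continuous f) (hC : ∀ x, f x ≤ C)
    {s : ℕ → ℝ} (hs : Summable s)
    (hsg : ∀ y : MarkovShift A, Real.exp (β * f y) ≤ s (y.1 0)) :
    Integrable f (gibbs h ν) ∧ p - p' ≤ (β - β') * ∫ x, f x ∂(gibbs h ν) := by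
  have hg : Continuous (fun x => β * f x) := by fun_prop
  have hg' : Continuous (fun x => β' * f x) := by fun_prop
  have hμ := gibbs_invariant hR hg hs hsg
  have hch := gibbs_change hR hR' hg hg' hs hsg
  set μ := gibbs h ν
  have := hμ.1
  let u : MarkovShift A → ℝ := fun x => Real.log (h' x) - Real.log (h x)
  have hu : Measurable u := hR'.1.measurable.log.sub hR.1.measurable.log
  let D : MarkovShift A → ℝ := fun x => β' * f x - β * f x - (u (shift x) - u x) - (p' - p)
  have hDm : Measurable D :=
    ((hg'.measurable.sub hg.measurable).sub
      ((hu.comp continuous_shift.measurable).sub hu)).sub measurable_const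
  have hch' : ∫⁻ x, ENNReal.ofReal (Real.exp (D x)) ∂μ = 1 := hch
  have hexp : Integrable (fun x => Real.exp (D x)) μ := by
    refine ⟨(Real.measurable_exp.comp hDm).aestronglyMeasurable, ?_⟩
    rw [hasFiniteIntegral_iff_ofReal (Eventually.of_forall fun x => (Real.exp_pos _).le), hch']
    exact ENNReal.one_lt_top
  have hexp1 : ∫ x, Real.exp (D x) ∂μ = 1 := by
    have h1 := ofReal_integral_eq_lintegral_ofReal hexp
      (Eventually.of_forall fun x => (Real.exp_pos _).le)
    rw [hch'] at h1
    simpa using h1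
  have hDle : ∀ x, D x ≤ Real.exp (D x) - 1 := fun x => by
    have := Real.add_one_le_exp (D x); linarith
  have hδ : 0 < β - β' := by linarith
  have hE : Integrable (fun x => -((β - β') * C) - (p' - p) - (Real.exp (D x) - 1)) μ :=
    (integrable_const _).sub (hexp.sub (integrable_const _))
  obtain ⟨hw, hw0⟩ := coboundary_integral hμ hu hE (fun x => by
    have h1 := hDle x
    have h2 := mul_le_mul_of_nonneg_left (hC x) hδ.le
    simp only [D] at h1 ⊢
    linarith)
  have hup : Integrable (fun x => (Real.exp (D x) - 1) + (u (shift x) - u x) + (p' - p)) μ :=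
    ((hexp.sub (integrable_const _)).add hw).add (integrable_const _)
  have hle : ∀ x, -((β - β') * f x) ≤
      (Real.exp (D x) - 1) + (u (shift x) - u x) + (p' - p) := by
    intro x
    have h1 := hDle x
    have : D x = β' * f x - β * f x - (u (shift x) - u x) - (p' - p) := rfl
    linarith
  have hnf : Integrable (fun x => -((β - β') * f x)) μ := by
    refine integrable_of_le_of_le (g₁ := fun _ => -((β - β') * C)) ?_ ?_ ?_ (integrable_const _) hup
    · exact (by fun_prop : Continuous fun x => -((β - β') * f x)).measurable.aestronglyMeasurable
    · refine Eventually.of_forall fun x => ?_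
      exact neg_le_neg (mul_le_mul_of_nonneg_left (hC x) hδ.le)
    · exact Eventually.of_forall hle
  have hfi : Integrable f μ := by
    refine (hnf.const_mul (-(β - β')⁻¹)).congr (Eventually.of_forall fun x => ?_)
    show -(β - β')⁻¹ * -((β - β') * f x) = f x
    field_simp
  refine ⟨hfi, ?_⟩
  have h3 := integral_mono hnf hup hle
  have h4 : ∫ x, ((Real.exp (D x) - 1) + (u (shift x) - u x) + (p' - p)) ∂μ = p' - p := by
    have a1 : Integrable (fun x => Real.exp (D x) - 1) μ := hexp.sub (integrable_const _)
    have a2 : Integrable (fun x => (Real.exp (D x) - 1) + (u (shift x) - u x)) μ := a1.add hw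
    rw [integral_add a2 (integrable_const _), integral_add a1 hw, hw0,
      integral_sub hexp (integrable_const _), hexp1]
    simp
  rw [h4, integral_neg, integral_const_mul] at h3
  linarith

end helpers

/-- `P(βf)/β → m(f)` and `∫ f dμ_β → m(f)` as `β → ∞`. -/
theorem pressure_and_energy_limits
    (A : ℕ → ℕ → Bool)
    (hmix : TopologicallyMixing A)
    (hbip : FinitelyPrimitive A)
    (f : MarkovShift A → ℝ)
    (hWalters : SatisfiesWalters f)
    (hVar1 : Var1Finite f)
    (P : ℝ → ℝ)
    (hPfin : HasGurevichPressure f (P 1))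
    (h : ℝ → MarkovShift A → ℝ)
    (ν : ℝ → Measure (MarkovShift A))
    (hRPF : ∀ β : ℝ, 1 < β → IsRPF (fun x => β * f x) (P β) (h β) (ν β)) :
    Tendsto (fun β : ℝ => P β / β) atTop (𝓝 (mf f)) ∧
      Tendsto (fun β : ℝ => ∫ x, f x ∂(gibbs (h β) (ν β))) atTop (𝓝 (mf f)) := by
  have hne : Nonempty (MarkovShift A) := by
    have := (hRPF 2 (by norm_num)).2.2.2.1
    exact nonempty_of_isProbabilityMeasure (ν 2)
  have hf : Continuous f := continuous_of_walters hWalters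
  obtain ⟨s, hs, hsf⟩ := exists_summable hbip hVar1 hPfin
  obtain ⟨C, hC⟩ : ∃ C, ∀ x, f x ≤ C := by
    refine ⟨∑' b, |s b|, fun x => ?_⟩
    have h1 := hsf x
    have h2 := hs.abs.le_tsum (x.1 0) (fun b _ => abs_nonneg _)
    have h3 := Real.add_one_le_exp (f x)
    have h4 := le_abs_self (s (x.1 0))
    linarith
  have hsβ : ∀ β : ℝ, 1 < β → ∃ t : ℕ → ℝ, Summable t ∧
      ∀ y : MarkovShift A, Real.exp (β * f y) ≤ t (y.1 0) := by
    intro β hβ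
    refine ⟨fun b => Real.exp ((β - 1) * C) * s b, hs.mul_left _, fun y => ?_⟩
    have h1 : β * f y ≤ (β - 1) * C + f y := by
      have := mul_le_mul_of_nonneg_left (hC y) (by linarith : 0 ≤ β - 1)
      linarith
    calc Real.exp (β * f y) ≤ Real.exp ((β - 1) * C + f y) := Real.exp_le_exp.2 h1
      _ = Real.exp ((β - 1) * C) * Real.exp (f y) := Real.exp_add _ _
      _ ≤ _ := mul_le_mul_of_nonneg_left (hsf y) (Real.exp_pos _).le
  have hinv : ∀ β : ℝ, 1 < β → IsInvariantProb (gibbs (h β) (ν β)) := by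
    intro β hβ
    obtain ⟨t, ht, htf⟩ := hsβ β hβ
    exact gibbs_invariant (hRPF β hβ) (by fun_prop) ht htf
  have hlow : ∀ β : ℝ, 2 < β → Integrable f (gibbs (h β) (ν β)) ∧
      P β - P 2 ≤ (β - 2) * ∫ x, f x ∂(gibbs (h β) (ν β)) := by
    intro β hβ
    obtain ⟨t, ht, htf⟩ := hsβ β (by linarith)
    exact rpf_lower (hRPF β (by linarith)) (hRPF 2 (by norm_num)) hβ hf hC ht htf
  set S : Set ℝ := {c | ∃ μ : Measure (MarkovShift A),
    IsInvariantProb μ ∧ Integrable f μ ∧ ∫ x, f x ∂μ = c} with hS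
  have hmf : mf f = sSup S := rfl
  have hub : ∀ β : ℝ, 1 < β → ∀ c ∈ S, c ≤ P β / β := by
    rintro β hβ c ⟨μ, hμ, hfμ, rfl⟩
    rw [le_div_iff₀ (by linarith), mul_comm]
    exact rpf_upper (hRPF β hβ) hμ hfμ
  have hbdd : BddAbove S := ⟨P 2 / 2, fun c hc => hub 2 (by norm_num) c hc⟩
  have hmem : ∀ β : ℝ, 2 < β → ∫ x, f x ∂(gibbs (h β) (ν β)) ∈ S := fun β hβ =>
    ⟨_, hinv β (by linarith), (hlow β hβ).1, rfl⟩
  have hSne : S.Nonempty := ⟨_, hmem 3 (by norm_num)⟩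
  have hle1 : ∀ β : ℝ, 2 < β → ∫ x, f x ∂(gibbs (h β) (ν β)) ≤ mf f := fun β hβ =>
    le_csSup hbdd (hmem β hβ)
  have hle2 : ∀ β : ℝ, 1 < β → mf f ≤ P β / β := fun β hβ => csSup_le hSne (hub β hβ)
  generalize mf f = m at hle1 hle2 ⊢
  have hconst : ∀ c : ℝ, Tendsto (fun β : ℝ => m + c / β) atTop (𝓝 m) := by
    intro c
    simpa using (tendsto_const_nhds (x := m)).add (tendsto_const_nhds (x := c).div_atTop tendsto_id)
  have hconst2 : Tendsto (fun β : ℝ => m + (2 * m - P 2) / (β - 2)) atTop (𝓝 m) := by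
    have : Tendsto (fun β : ℝ => β - 2) atTop atTop := tendsto_atTop_add_const_right _ _ tendsto_id
    simpa using (tendsto_const_nhds (x := m)).add
      (tendsto_const_nhds (x := 2 * m - P 2).div_atTop this)
  constructor
  · refine tendsto_of_tendsto_of_tendsto_of_le_of_le' tendsto_const_nhds (hconst (P 2 - 2 * m)) ?_ ?_
    · filter_upwards [eventually_gt_atTop 1] with β hβ using hle2 β hβ
    · filter_upwards [eventually_gt_atTop 2] with β hβ
      have h1 := (hlow β hβ).2
      have h2 := mul_le_mul_of_nonneg_left (hle1 β hβ) (by linarith : 0 ≤ β - 2)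
      have hβ0 : 0 < β := by linarith
      rw [div_le_iff₀ hβ0, add_mul, div_mul_cancel₀ _ hβ0.ne']
      linarith
  · refine tendsto_of_tendsto_of_tendsto_of_le_of_le' hconst2 tendsto_const_nhds ?_ ?_
    · filter_upwards [eventually_gt_atTop 2] with β hβ
      have h1 := (hlow β hβ).2
      have h2 := hle2 β (by linarith)
      have hβ0 : 0 < β := by linarith
      have hβ2 : 0 < β - 2 := by linarith
      rw [le_div_iff₀ hβ0] at h2
      have h3 : (m + (2 * m - P 2) / (β - 2)) * (β - 2) ≤
          (∫ x, f x ∂(gibbs (h β) (ν β))) * (β - 2) := by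
        rw [add_mul, div_mul_cancel₀ _ hβ2.ne']
        linarith
      exact le_of_mul_le_mul_right h3 hβ2
    · filter_upwards [eventually_gt_atTop 2] with β hβ using hle1 β hβ

end MarkovShift
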